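/- With p₀(n) := 205n² − 160n + 32, the series identity ∑_{n≥1} (−1/2^10)^n · ((1)_n)^5 / ((1/2)_n)^5 · [ −(49 − 245n + 320n²)/n^9 + (3 H_n^{(4)} + H_{2n}^{(4)}) p₀(n)/(2 n^5) ] = −ζ(7) holds, where ζ is the Riemann zeta function. -/

import Mathlib

/-- The rising factorial (Pochhammer symbol) `(a)ₙ = a(a+1)⋯(a+n-1)`. -/
noncomputable def risingFactorial (a : ℝ) (n : ℕ) : ℝ :=
  ∏ i ∈ Finset.range n, (a + i)

/-- The generalized harmonic number `H_n^{(s)} = ∑_{k=1}^n 1/k^s`. -/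
noncomputable def genHarmonic (s n : ℕ) : ℝ :=
  ∑ k ∈ Finset.range n, 1 / ((k : ℝ) + 1) ^ s

open Filter Topology
open scoped Nat

/-! For `‖z‖ < 1` the rational functions `wzF z n k` and `wzG z n k` of `z` form a
Wilf–Zeilberger pair, which sums to
`∑ₙ wzG z n 0 = ∑ₖ wzF z 0 k = ∑ₖ (k+1) / ((k+1)⁴ - z) = ∑ⱼ ζ(4j+3) zʲ`.
Both series converge locally uniformly in `z`, so they may be differentiated termwise. At `z = 0`
the derivative of the right-hand side is `ζ(7)`; on the left, the logarithmic derivatives of the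
products `∏ (m⁴ + 4z)` and `∏ (m⁴ - z)` produce the harmonic numbers `H⁽⁴⁾`. -/

section WZPair

lemma tsum_sub_tsum_eq_of_sub_eq_sub {E : Type*} [AddCommGroup E] [TopologicalSpace E]
    [IsTopologicalAddGroup E] [T2Space E] {f f' g : ℕ → E}
    (h : ∀ k, f' k - f k = g (k + 1) - g k) (hf : Summable f) (hf' : Summable f')
    (hg : Tendsto g atTop (𝓝 0)) : ∑' k, f k - ∑' k, f' k = g 0 := by
  have hsum := (hf'.hasSum.sub hf.hasSum).tendsto_sum_nat
  simp only [h, Finset.sum_range_sub] at hsum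
  have key := tendsto_nhds_unique hsum (hg.sub_const (g 0))
  rw [← neg_sub, key, zero_sub, neg_neg]

theorem hasSum_of_wz_pair {E : Type*} [NormedAddCommGroup E] [CompleteSpace E]
    {F G : ℕ → ℕ → E} {u : ℕ → ℝ} (hu : Summable u)
    (h : ∀ n k, F (n + 1) k - F n k = G n (k + 1) - G n k)
    (hF : ∀ n k, ‖F n k‖ ≤ u (n + k)) (hG : ∀ n k, ‖G n k‖ ≤ u (n + k)) :
    HasSum (fun n ↦ G n 0) (∑' k, F 0 k) := by
  have hu_shift (n : ℕ) : Summable fun k ↦ u (n + k) := by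
    simpa only [add_comm n] using (summable_nat_add_iff n).2 hu
  have hF_summable (n : ℕ) : Summable (F n) := .of_norm_bounded (hu_shift n) (hF n)
  have hG_summable : Summable fun n ↦ G n 0 := .of_norm_bounded hu fun n ↦ hG n 0
  have hG_tendsto (n : ℕ) : Tendsto (G n) atTop (𝓝 0) :=
    squeeze_zero_norm (hG n) (hu_shift n).tendsto_atTop_zero
  have hF_tsum_tendsto : Tendsto (fun n ↦ ∑' k, F n k) atTop (𝓝 0) := by
    refine squeeze_zero_norm (fun n ↦ tsum_of_norm_bounded (hu_shift n).hasSum (hF n)) ?_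
    simpa only [add_comm] using tendsto_sum_nat_add u
  have hG_eq (n : ℕ) : G n 0 = ∑' k, F n k - ∑' k, F (n + 1) k :=
    (tsum_sub_tsum_eq_of_sub_eq_sub (h n) (hF_summable n) (hF_summable (n + 1))
      (hG_tendsto n)).symm
  have hG_partial (N : ℕ) : ∑ n ∈ Finset.range N, G n 0 = ∑' k, F 0 k - ∑' k, F N k := by
    simp only [hG_eq, Finset.sum_range_sub']
  refine hG_summable.hasSum_iff_tendsto_nat.2 ?_
  simpa only [hG_partial, sub_zero] using hF_tsum_tendsto.const_sub (∑' k, F 0 k)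

end WZPair

section HarmonicNumbers

lemma genHarmonic_succ (s n : ℕ) :
    genHarmonic s (n + 1) = genHarmonic s n + 1 / ((n : ℝ) + 1) ^ s :=
  Finset.sum_range_succ _ _

lemma genHarmonic_nonneg (s n : ℕ) : 0 ≤ genHarmonic s n :=
  Finset.sum_nonneg fun _ _ ↦ by positivity

lemma genHarmonic_le_tsum {s : ℕ} (hs : 1 < s) (n : ℕ) :
    genHarmonic s n ≤ ∑' k : ℕ, 1 / ((k : ℝ) + 1) ^ s := by
  have hsum : Summable fun k : ℕ ↦ 1 / ((k : ℝ) + 1) ^ s := by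
    simpa using (summable_nat_add_iff 1).2 (Real.summable_one_div_nat_pow.2 hs)
  exact hsum.sum_le_tsum _ fun _ _ ↦ by positivity

end HarmonicNumbers

section Algebra

variable {K : Type*} [Field K]

/-- The product `∏_{m=1}^{N} (m⁴ - z)`, from which the WZ pair is built. -/
def quarticProd (z : K) (N : ℕ) : K :=
  ∏ m ∈ Finset.range N, (((m : K) + 1) ^ 4 - z)

/-- The hypergeometric term
`(-1)ⁿ (n!)² / (2n)! * ∏_{m=1}^{n} (m⁴ + 4z) / ∏_{m=n+k+1}^{2n+k+1} (m⁴ - z)` common to both members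
of the WZ pair. -/
def wzKernel (z : K) (n k : ℕ) : K :=
  (-1) ^ n / n.centralBinom *
    (quarticProd (-4 * z) n * quarticProd z (n + k) / quarticProd z (2 * n + k + 1))

/-- The member of the WZ pair that is summed over `k`. -/
def wzF (z : K) (n k : ℕ) : K :=
  wzKernel z n k * ((3 * n + 2 * k + 2) / 2)

/-- The member of the WZ pair that is summed over `n`; its rational factor is the WZ certificate of
`wzF`. -/
def wzG (z : K) (n k : ℕ) : K :=
  wzKernel z n k / (4 * (2 * n + 1)) *
    ((2 * n + k + 1) ^ 2 + (3 * n + k + 2) ^ 2 -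
      (n + 1) * (3 * n + 2 * k + 3) * ((n + 1) ^ 4 + 4 * z) / ((2 * n + k + 2) ^ 4 - z))

lemma quarticProd_zero_right (z : K) : quarticProd z 0 = 1 :=
  Finset.prod_range_zero _

lemma quarticProd_succ (z : K) (N : ℕ) :
    quarticProd z (N + 1) = quarticProd z N * (((N : K) + 1) ^ 4 - z) :=
  Finset.prod_range_succ _ _

lemma quarticProd_zero_left (N : ℕ) : quarticProd (0 : K) N = (N ! : K) ^ 4 := by
  simp only [quarticProd, sub_zero, Finset.prod_pow, ← Finset.prod_range_add_one_eq_factorial]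
  push_cast
  rfl

lemma quarticProd_ne_zero {z : K} (hz : ∀ m : ℕ, m ≠ 0 → (m : K) ^ 4 ≠ z) (N : ℕ) :
    quarticProd z N ≠ 0 :=
  Finset.prod_ne_zero_iff.2 fun m _ ↦ sub_ne_zero.2 (mod_cast hz (m + 1) m.succ_ne_zero)

lemma wzKernel_succ_right (z : K) (n k : ℕ) :
    wzKernel z n (k + 1) =
      wzKernel z n k * (((n + k + 1) ^ 4 - z) / ((2 * n + k + 2) ^ 4 - z)) := by
  have hleft : quarticProd z (n + (k + 1)) = quarticProd z (n + k) * ((n + k + 1) ^ 4 - z) := by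
    rw [← add_assoc, quarticProd_succ]
    push_cast
    rfl
  have hright : quarticProd z (2 * n + (k + 1) + 1) =
      quarticProd z (2 * n + k + 1) * ((2 * n + k + 2) ^ 4 - z) := by
    rw [← add_assoc, quarticProd_succ]
    push_cast
    ring
  rw [wzKernel, wzKernel, hleft, hright, ← mul_assoc (quarticProd _ _), mul_div_mul_comm,
    ← mul_assoc]

lemma wzG_zero_right (z : K) (n : ℕ) :
    wzG z n 0 = wzKernel z n 0 / (4 * (2 * n + 1)) *
      ((2 * n + 1) ^ 2 + (3 * n + 2) ^ 2 -
        3 * (n + 1) ^ 2 * (((n + 1) ^ 4 + 4 * z) / ((2 * (n + 1)) ^ 4 - z))) := by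
  rw [wzG]
  push_cast
  ring

variable [CharZero K]

lemma wzF_zero_left {z : K} (hz : ∀ m : ℕ, m ≠ 0 → (m : K) ^ 4 ≠ z) (k : ℕ) :
    wzF z 0 k = (k + 1) / (((k : K) + 1) ^ 4 - z) := by
  have hk := quarticProd_ne_zero hz k
  have hfac : ((k : K) + 1) ^ 4 - z ≠ 0 :=
    sub_ne_zero.2 (mod_cast hz (k + 1) k.succ_ne_zero)
  simp only [wzF, wzKernel, mul_zero, zero_add, quarticProd_zero_right, quarticProd_succ,
    Nat.centralBinom_zero]
  push_cast
  field_simp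
  ring

lemma centralBinom_cast_succ (n : ℕ) :
    ((n + 1).centralBinom : K) = 2 * (2 * n + 1) / (n + 1) * n.centralBinom := by
  have h : ((n : K) + 1) * (n + 1).centralBinom = 2 * (2 * n + 1) * n.centralBinom :=
    mod_cast n.succ_mul_centralBinom_succ
  have hn : (n : K) + 1 ≠ 0 := n.cast_add_one_ne_zero
  field_simp
  linear_combination h

lemma wzKernel_succ_left {z : K} (hz : ∀ m : ℕ, m ≠ 0 → (m : K) ^ 4 ≠ z) (n k : ℕ) :
    wzKernel z (n + 1) k = -wzKernel z n k * ((n + 1) / (2 * (2 * n + 1))) *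
      (((n + 1) ^ 4 + 4 * z) * ((n + k + 1) ^ 4 - z) /
        (((2 * n + k + 2) ^ 4 - z) * ((2 * n + k + 3) ^ 4 - z))) := by
  have h₁ : (2 * n + k + 2 : K) ^ 4 - z ≠ 0 :=
    sub_ne_zero.2 (mod_cast hz (2 * n + k + 2) (by simp))
  have h₂ : (2 * n + k + 3 : K) ^ 4 - z ≠ 0 :=
    sub_ne_zero.2 (mod_cast hz (2 * n + k + 3) (by simp))
  have hprod := quarticProd_ne_zero hz (2 * n + k + 1)
  have hn : (n : K) + 1 ≠ 0 := n.cast_add_one_ne_zero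
  have hodd : 2 * (n : K) + 1 ≠ 0 := mod_cast (2 * n).succ_ne_zero
  have hbinom : (n.centralBinom : K) ≠ 0 := mod_cast n.centralBinom_ne_zero
  have hleft : quarticProd z (n + 1 + k) = quarticProd z (n + k) * ((n + k + 1) ^ 4 - z) := by
    rw [add_right_comm, quarticProd_succ]
    push_cast
    rfl
  have hright : quarticProd z (2 * (n + 1) + k + 1) = quarticProd z (2 * n + k + 1) *
      ((2 * n + k + 2) ^ 4 - z) * ((2 * n + k + 3) ^ 4 - z) := by
    rw [show 2 * (n + 1) + k + 1 = 2 * n + k + 1 + 1 + 1 by ring, quarticProd_succ,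
      quarticProd_succ]
    push_cast
    ring
  simp only [wzKernel, hleft, hright, quarticProd_succ (-4 * z), centralBinom_cast_succ]
  field_simp
  ring

/-- The WZ equation after division by `wzKernel z n k` and clearing of denominators. -/
lemma wz_certificate {R : Type*} [CommRing R] (z n k : R) :
    -((n + 1) * ((n + 1) ^ 4 + 4 * z) * (3 * n + 2 * k + 5) * ((n + k + 1) ^ 4 - z)) -
        2 * (2 * n + 1) * (3 * n + 2 * k + 2) *
          (((2 * n + k + 2) ^ 4 - z) * ((2 * n + k + 3) ^ 4 - z)) =
      (((2 * n + k + 2) ^ 2 + (3 * n + k + 3) ^ 2) * ((2 * n + k + 3) ^ 4 - z) -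
          (n + 1) * (3 * n + 2 * k + 5) * ((n + 1) ^ 4 + 4 * z)) * ((n + k + 1) ^ 4 - z) -
        (((2 * n + k + 1) ^ 2 + (3 * n + k + 2) ^ 2) * ((2 * n + k + 2) ^ 4 - z) -
          (n + 1) * (3 * n + 2 * k + 3) * ((n + 1) ^ 4 + 4 * z)) * ((2 * n + k + 3) ^ 4 - z) := by
  ring

theorem wzF_succ_sub_wzF {z : K} (hz : ∀ m : ℕ, m ≠ 0 → (m : K) ^ 4 ≠ z) (n k : ℕ) :
    wzF z (n + 1) k - wzF z n k = wzG z n (k + 1) - wzG z n k := by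
  have h₁ : (2 * n + k + 2 : K) ^ 4 - z ≠ 0 :=
    sub_ne_zero.2 (mod_cast hz (2 * n + k + 2) (by simp))
  have h₂ : (2 * n + k + 3 : K) ^ 4 - z ≠ 0 :=
    sub_ne_zero.2 (mod_cast hz (2 * n + k + 3) (by simp))
  have hodd : 2 * (n : K) + 1 ≠ 0 := mod_cast (2 * n).succ_ne_zero
  simp only [wzF, wzG, wzKernel_succ_left hz, wzKernel_succ_right]
  push_cast
  rw [show (2 * n + (k + 1) + 2 : K) = 2 * n + k + 3 by ring]
  have key := wz_certificate z (n : K) k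
  generalize (2 * n + k + 2 : K) ^ 4 - z = d₁ at *
  generalize (2 * n + k + 3 : K) ^ 4 - z = d₂ at *
  generalize 2 * (n : K) + 1 = e at *
  field_simp
  linear_combination 4 * wzKernel z n k * key

end Algebra

section Bounds

variable {𝕜 : Type*} [RCLike 𝕜]

lemma natCast_pow_four_ne_of_norm_lt_one {z : 𝕜} (hz : ‖z‖ < 1) (m : ℕ) (hm : m ≠ 0) :
    (m : 𝕜) ^ 4 ≠ z := by
  rintro rfl
  rw [norm_pow, RCLike.norm_natCast] at hz
  exact hz.not_ge (one_le_pow₀ (mod_cast Nat.one_le_iff_ne_zero.2 hm))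

lemma norm_quarticProd_le (z : 𝕜) (N : ℕ) :
    ‖quarticProd z N‖ ≤ (N ! : ℝ) ^ 4 * Real.exp (‖z‖ * genHarmonic 4 N) := by
  induction N with
  | zero => simp [quarticProd_zero_right, genHarmonic]
  | succ N ih =>
    have hfactor : ‖((N : 𝕜) + 1) ^ 4 - z‖ ≤
        ((N : ℝ) + 1) ^ 4 * Real.exp (‖z‖ * (1 / ((N : ℝ) + 1) ^ 4)) := by
      calc ‖((N : 𝕜) + 1) ^ 4 - z‖ ≤ ((N : ℝ) + 1) ^ 4 + ‖z‖ := by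
            refine (norm_sub_le _ _).trans_eq ?_
            rw [norm_pow, ← Nat.cast_add_one, RCLike.norm_natCast, Nat.cast_add_one]
        _ = ((N : ℝ) + 1) ^ 4 * (‖z‖ * (1 / ((N : ℝ) + 1) ^ 4) + 1) := by field_simp; ring
        _ ≤ _ := by gcongr; exact Real.add_one_le_exp _
    calc ‖quarticProd z (N + 1)‖ = ‖quarticProd z N‖ * ‖((N : 𝕜) + 1) ^ 4 - z‖ := by
          rw [quarticProd_succ, norm_mul]
      _ ≤ _ := mul_le_mul ih hfactor (norm_nonneg _) (by positivity)
      _ = _ := by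
          rw [genHarmonic_succ, mul_add, Real.exp_add, Nat.factorial_succ]
          push_cast
          ring

lemma factorial_pow_four_le_norm_quarticProd {z : 𝕜} (hz : ‖z‖ < 1) (N : ℕ) :
    (N ! : ℝ) ^ 4 ≤ ‖quarticProd z N‖ * Real.exp (genHarmonic 4 N / (1 - ‖z‖)) := by
  induction N with
  | zero => simp [quarticProd_zero_right, genHarmonic]
  | succ N ih =>
    have : 0 < 1 - ‖z‖ := sub_pos.2 hz
    set x : ℝ := ((N : ℝ) + 1) ^ 4 with hx
    have hx_one : 1 ≤ x := one_le_pow₀ (by simp)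
    have hnorm : x - ‖z‖ ≤ ‖((N : 𝕜) + 1) ^ 4 - z‖ := by
      convert norm_sub_norm_le (((N : 𝕜) + 1) ^ 4) z
      rw [norm_pow, ← Nat.cast_add_one, RCLike.norm_natCast, Nat.cast_add_one]
    have hfactor : x ≤ ‖((N : 𝕜) + 1) ^ 4 - z‖ * Real.exp (1 / x / (1 - ‖z‖)) := by
      calc x ≤ (x - ‖z‖) * (1 / x / (1 - ‖z‖) + 1) := by
            have hratio : 1 ≤ (x - ‖z‖) * (1 / x / (1 - ‖z‖)) := by
              rw [div_div, mul_one_div, one_le_div (by positivity)]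
              nlinarith [norm_nonneg z]
            linarith
        _ ≤ _ := by
            gcongr
            exact Real.add_one_le_exp _
    calc ((N + 1)! : ℝ) ^ 4 = (N ! : ℝ) ^ 4 * x := by
          rw [Nat.factorial_succ, hx]
          push_cast
          ring
      _ ≤ _ := mul_le_mul ih hfactor (by positivity) (by positivity)
      _ = _ := by
          rw [quarticProd_succ, norm_mul, genHarmonic_succ, add_div, Real.exp_add]
          ring

lemma exists_norm_quarticProd_le (R : ℝ) :
    ∃ C ≥ 0, ∀ z : 𝕜, ‖z‖ ≤ R → ∀ N : ℕ, ‖quarticProd z N‖ ≤ C * (N ! : ℝ) ^ 4 := by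
  refine ⟨Real.exp (R * ∑' k : ℕ, 1 / ((k : ℝ) + 1) ^ 4), by positivity, fun z hz N ↦ ?_⟩
  rw [mul_comm]
  refine (norm_quarticProd_le z N).trans ?_
  have hH := genHarmonic_le_tsum (s := 4) (by norm_num) N
  have hH_nonneg := genHarmonic_nonneg 4 N
  gcongr
  exact (norm_nonneg z).trans hz

lemma exists_factorial_pow_four_le_norm_quarticProd {r : ℝ} (hr : r < 1) :
    ∃ C ≥ 0, ∀ z : 𝕜, ‖z‖ ≤ r → ∀ N : ℕ, (N ! : ℝ) ^ 4 ≤ C * ‖quarticProd z N‖ := by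
  refine ⟨Real.exp ((∑' k : ℕ, 1 / ((k : ℝ) + 1) ^ 4) / (1 - r)), by positivity,
    fun z hz N ↦ ?_⟩
  rw [mul_comm]
  refine (factorial_pow_four_le_norm_quarticProd (hz.trans_lt hr) N).trans ?_
  have : 0 < 1 - r := sub_pos.2 hr
  have hH := genHarmonic_le_tsum (s := 4) (by norm_num) N
  gcongr

lemma factorial_mul_factorial_div_factorial_le (n k : ℕ) :
    (n ! : ℝ) * (n + k)! / (2 * n + k + 1)! ≤ 1 / (2 * n + k + 1) := by
  have h : (n ! : ℝ) * (n + k)! ≤ (2 * n + k)! := by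
    rw [two_mul, add_assoc]
    exact_mod_cast Nat.le_of_dvd (Nat.factorial_pos _)
      (Nat.factorial_mul_factorial_dvd_factorial_add n (n + k))
  rw [Nat.factorial_succ, div_le_div_iff₀ (by positivity) (by positivity)]
  push_cast
  nlinarith

lemma exists_norm_wzKernel_le {r : ℝ} (hr : r < 1) :
    ∃ C ≥ 0, ∀ z : 𝕜, ‖z‖ ≤ r → ∀ n k : ℕ,
      ‖wzKernel z n k‖ ≤ C * (1 / (2 * n + k + 1)) ^ 4 := by
  obtain ⟨A, hA, hfour⟩ := exists_norm_quarticProd_le (𝕜 := 𝕜) 4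
  obtain ⟨B, hB, hone⟩ := exists_norm_quarticProd_le (𝕜 := 𝕜) 1
  obtain ⟨D, hD, hden⟩ := exists_factorial_pow_four_le_norm_quarticProd (𝕜 := 𝕜) hr
  refine ⟨A * B * D, by positivity, fun z hz n k ↦ ?_⟩
  have hz_lt : ‖z‖ < 1 := hz.trans_lt hr
  have hsign : ‖(-1 : 𝕜) ^ n / n.centralBinom‖ ≤ 1 := by
    rw [norm_div, norm_pow, norm_neg, norm_one, one_pow, RCLike.norm_natCast]
    exact div_le_one_of_le₀ (mod_cast n.centralBinom_pos) (by positivity)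
  have hnum : ‖quarticProd (-4 * z) n‖ ≤ A * (n ! : ℝ) ^ 4 := by
    refine hfour _ ?_ n
    rw [norm_mul, norm_neg, RCLike.norm_ofNat]
    linarith
  have hnum' : ‖quarticProd z (n + k)‖ ≤ B * ((n + k)! : ℝ) ^ 4 := hone z hz_lt.le _
  have hquot : 1 / ‖quarticProd z (2 * n + k + 1)‖ ≤ D / ((2 * n + k + 1)! : ℝ) ^ 4 := by
    have hpos : 0 < ‖quarticProd z (2 * n + k + 1)‖ :=
      norm_pos_iff.2 (quarticProd_ne_zero (natCast_pow_four_ne_of_norm_lt_one hz_lt) _)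
    rw [div_le_div_iff₀ hpos (by positivity), one_mul]
    exact hden z hz _
  calc ‖wzKernel z n k‖
      = ‖(-1 : 𝕜) ^ n / n.centralBinom‖ * (‖quarticProd (-4 * z) n‖ * ‖quarticProd z (n + k)‖ *
          (1 / ‖quarticProd z (2 * n + k + 1)‖)) := by
        rw [wzKernel, norm_mul, norm_div (quarticProd _ _ * _), norm_mul (quarticProd _ _),
          mul_one_div]
    _ ≤ 1 * (A * (n ! : ℝ) ^ 4 * (B * ((n + k)! : ℝ) ^ 4) *
          (D / ((2 * n + k + 1)! : ℝ) ^ 4)) := by gcongr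
    _ = A * B * D * ((n ! : ℝ) * (n + k)! / (2 * n + k + 1)!) ^ 4 := by ring
    _ ≤ A * B * D * (1 / (2 * n + k + 1)) ^ 4 :=
        mul_le_mul_of_nonneg_left (pow_le_pow_left₀ (by positivity)
          (factorial_mul_factorial_div_factorial_le n k) 4) (by positivity)

lemma exists_norm_wzF_le {r : ℝ} (hr : r < 1) :
    ∃ C, ∀ z : 𝕜, ‖z‖ ≤ r → ∀ n k : ℕ, ‖wzF z n k‖ ≤ C / ((n + k : ℕ) + 1) ^ 2 := by
  obtain ⟨C, hC, hkernel⟩ := exists_norm_wzKernel_le (𝕜 := 𝕜) hr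
  refine ⟨C, fun z hz n k ↦ ?_⟩
  have hfactor : ‖(3 * n + 2 * k + 2 : 𝕜) / 2‖ = (3 * n + 2 * k + 2) / 2 := by
    rw [norm_div, RCLike.norm_ofNat]
    exact_mod_cast congrArg (· / 2) (RCLike.norm_natCast (K := 𝕜) (3 * n + 2 * k + 2))
  calc ‖wzF z n k‖ ≤ C * (1 / (2 * n + k + 1)) ^ 4 * (2 * n + k + 1) := by
        rw [wzF, norm_mul, hfactor]
        gcongr
        · exact hkernel z hz n k
        · linarith
    _ = C / (2 * n + k + 1) ^ 3 := by field_simp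
    _ ≤ C / (2 * n + k + 1) ^ 2 := by
        gcongr
        · linarith
        · norm_num
    _ ≤ C / ((n + k : ℕ) + 1) ^ 2 := by
        push_cast
        gcongr
        linarith

lemma norm_pow_four_add_div_pow_four_sub_le {z : 𝕜} (hz : ‖z‖ < 1) (n k : ℕ) :
    ‖((n + 1) ^ 4 + 4 * z) / ((2 * n + k + 2) ^ 4 - z)‖ ≤ 5 := by
  have hnum : ‖(n + 1 : 𝕜) ^ 4 + 4 * z‖ ≤ 5 * ((n : ℝ) + 1) ^ 4 := by
    have hone : 1 ≤ ((n : ℝ) + 1) ^ 4 := one_le_pow₀ (by linarith)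
    refine (norm_add_le _ _).trans ?_
    rw [norm_pow, norm_mul, RCLike.norm_ofNat, ← Nat.cast_add_one, RCLike.norm_natCast,
      Nat.cast_add_one]
    linarith
  have hden : ((n : ℝ) + 1) ^ 4 ≤ ‖(2 * n + k + 2 : 𝕜) ^ 4 - z‖ := by
    have hnorm : ‖(2 * n + k + 2 : 𝕜) ^ 4‖ = (2 * (n : ℝ) + k + 2) ^ 4 :=
      mod_cast RCLike.norm_natCast (K := 𝕜) ((2 * n + k + 2) ^ 4)
    have hpow : ((n : ℝ) + 1) ^ 4 + 1 ≤ (2 * (n : ℝ) + k + 2) ^ 4 :=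
      calc ((n : ℝ) + 1) ^ 4 + 1 ≤ ((n : ℝ) + 1 + 1) ^ 4 := by
            rw [← sub_nonneg]
            ring_nf
            positivity
        _ ≤ _ := pow_le_pow_left₀ (by positivity) (by linarith) 4
    have hsub := norm_sub_norm_le ((2 * n + k + 2 : 𝕜) ^ 4) z
    linarith
  rw [norm_div]
  exact div_le_of_le_mul₀ (norm_nonneg _) (by norm_num) (hnum.trans (by gcongr))

lemma exists_norm_wzG_le {r : ℝ} (hr : r < 1) :
    ∃ C, ∀ z : 𝕜, ‖z‖ ≤ r → ∀ n k : ℕ, ‖wzG z n k‖ ≤ C / ((n + k : ℕ) + 1) ^ 2 := by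
  obtain ⟨C, hC, hkernel⟩ := exists_norm_wzKernel_le (𝕜 := 𝕜) hr
  refine ⟨20 * C, fun z hz n k ↦ ?_⟩
  have hn : (0 : ℝ) ≤ n := n.cast_nonneg
  have hk : (0 : ℝ) ≤ k := k.cast_nonneg
  have hden : 1 ≤ ‖(4 * (2 * n + 1) : 𝕜)‖ := by
    have h : ‖(4 * (2 * n + 1) : 𝕜)‖ = (4 * (2 * n + 1) : ℕ) :=
      mod_cast RCLike.norm_natCast (K := 𝕜) (4 * (2 * n + 1))
    rw [h]
    exact_mod_cast (by omega : 1 ≤ 4 * (2 * n + 1))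
  have hsq : ‖((2 * n + k + 1) ^ 2 + (3 * n + k + 2) ^ 2 : 𝕜)‖ =
      (2 * (n : ℝ) + k + 1) ^ 2 + (3 * n + k + 2) ^ 2 :=
    mod_cast RCLike.norm_natCast (K := 𝕜) ((2 * n + k + 1) ^ 2 + (3 * n + k + 2) ^ 2)
  have hprod : ‖((n + 1) * (3 * n + 2 * k + 3) : 𝕜)‖ = ((n : ℝ) + 1) * (3 * n + 2 * k + 3) :=
    mod_cast RCLike.norm_natCast (K := 𝕜) ((n + 1) * (3 * n + 2 * k + 3))
  have hbracket : ‖((2 * n + k + 1) ^ 2 + (3 * n + k + 2) ^ 2 -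
      (n + 1) * (3 * n + 2 * k + 3) * ((n + 1) ^ 4 + 4 * z) / ((2 * n + k + 2) ^ 4 - z) : 𝕜)‖ ≤
      20 * (2 * (n : ℝ) + k + 1) ^ 2 := by
    rw [mul_div_assoc]
    refine (norm_sub_le _ _).trans ?_
    rw [norm_mul, hsq, hprod]
    have hquot := mul_le_mul_of_nonneg_left
      (norm_pow_four_add_div_pow_four_sub_le (hz.trans_lt hr) n k)
      (show 0 ≤ ((n : ℝ) + 1) * (3 * n + 2 * k + 3) by positivity)
    nlinarith [mul_nonneg hn hk, sq_nonneg (n : ℝ), sq_nonneg (k : ℝ)]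
  calc ‖wzG z n k‖
      ≤ C * (1 / (2 * n + k + 1)) ^ 4 / 1 * (20 * (2 * (n : ℝ) + k + 1) ^ 2) := by
        rw [wzG, norm_mul, norm_div]
        gcongr
        exact hkernel z hz n k
    _ = 20 * C / (2 * n + k + 1) ^ 2 := by field_simp
    _ ≤ 20 * C / ((n + k : ℕ) + 1) ^ 2 := by
        push_cast
        gcongr
        linarith

lemma summable_const_div_add_one_sq (C : ℝ) : Summable fun m : ℕ ↦ C / ((m : ℝ) + 1) ^ 2 := by
  have h := (summable_nat_add_iff 1).2 (Real.summable_one_div_nat_pow.2 one_lt_two)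
  simpa [div_eq_mul_inv] using h.mul_left C

theorem hasSum_wzG {z : 𝕜} (hz : ‖z‖ < 1) :
    HasSum (fun n ↦ wzG z n 0) (∑' k, wzF z 0 k) := by
  obtain ⟨C, hC⟩ := exists_norm_wzF_le (𝕜 := 𝕜) hz
  obtain ⟨D, hD⟩ := exists_norm_wzG_le (𝕜 := 𝕜) hz
  refine hasSum_of_wz_pair (summable_const_div_add_one_sq (max C D))
    (wzF_succ_sub_wzF (natCast_pow_four_ne_of_norm_lt_one hz)) (fun n k ↦ ?_) fun n k ↦ ?_
  · exact (hC z le_rfl n k).trans (by gcongr; exact le_max_left _ _)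
  · exact (hD z le_rfl n k).trans (by gcongr; exact le_max_right _ _)

end Bounds

section Derivative

section RCLike

variable {𝕜 : Type*} [RCLike 𝕜]

lemma differentiable_quarticProd (N : ℕ) : Differentiable 𝕜 fun z : 𝕜 ↦ quarticProd z N := by
  unfold quarticProd
  fun_prop

lemma differentiableAt_wzKernel {z : 𝕜} (hz : ‖z‖ < 1) (n k : ℕ) :
    DifferentiableAt 𝕜 (fun w ↦ wzKernel w n k) z := by
  have hne := quarticProd_ne_zero (natCast_pow_four_ne_of_norm_lt_one hz) (2 * n + k + 1)
  have hcomp : DifferentiableAt 𝕜 (fun w : 𝕜 ↦ quarticProd (-4 * w) n) z :=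
    DifferentiableAt.comp z (g := fun w ↦ quarticProd w n) (differentiable_quarticProd n _)
      (differentiableAt_id.const_mul (-4))
  exact ((hcomp.mul (differentiable_quarticProd _ z)).div
    (differentiable_quarticProd _ z) hne).const_mul _

lemma differentiableAt_wzF {z : 𝕜} (hz : ‖z‖ < 1) (n k : ℕ) :
    DifferentiableAt 𝕜 (fun w ↦ wzF w n k) z :=
  (differentiableAt_wzKernel hz n k).mul_const _

lemma differentiableAt_wzG {z : 𝕜} (hz : ‖z‖ < 1) (n k : ℕ) :
    DifferentiableAt 𝕜 (fun w ↦ wzG w n k) z := by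
  have hne : (2 * n + k + 2 : 𝕜) ^ 4 - z ≠ 0 :=
    sub_ne_zero.2 (mod_cast natCast_pow_four_ne_of_norm_lt_one hz (2 * n + k + 2) (by simp))
  have hkernel := differentiableAt_wzKernel hz n k
  unfold wzG
  fun_prop (disch := assumption)

lemma hasDerivAt_quarticProd_zero (N : ℕ) :
    HasDerivAt (fun z : 𝕜 ↦ quarticProd z N) (-((N ! : 𝕜) ^ 4 * (genHarmonic 4 N : ℝ))) 0 := by
  induction N with
  | zero => simpa [quarticProd_zero_right, genHarmonic] using hasDerivAt_const (0 : 𝕜) (1 : 𝕜)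
  | succ N ih =>
    have hN : (N : 𝕜) + 1 ≠ 0 := N.cast_add_one_ne_zero
    simp only [quarticProd_succ]
    convert! ih.mul ((hasDerivAt_id (0 : 𝕜)).const_sub (((N : 𝕜) + 1) ^ 4)) using 1
    rw [quarticProd_zero_left, genHarmonic_succ, Nat.factorial_succ]
    push_cast
    simp only [id]
    field_simp
    ring

lemma hasDerivAt_wzKernel_zero (n k : ℕ) :
    HasDerivAt (fun z : 𝕜 ↦ wzKernel z n k)
      (wzKernel 0 n k * (4 * (genHarmonic 4 n : ℝ) - (genHarmonic 4 (n + k) : ℝ) +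
        (genHarmonic 4 (2 * n + k + 1) : ℝ))) 0 := by
  have hcomp : HasDerivAt (fun z : 𝕜 ↦ quarticProd (-4 * z) n)
      (-((n ! : 𝕜) ^ 4 * (genHarmonic 4 n : ℝ)) * (-4)) 0 :=
    HasDerivAt.comp 0 (h₂ := fun z : 𝕜 ↦ quarticProd z n)
      (by simpa using hasDerivAt_quarticProd_zero (𝕜 := 𝕜) n)
      (by simpa only [mul_one] using (hasDerivAt_id' (0 : 𝕜)).const_mul (-4))
  have hfac (N : ℕ) : (N ! : 𝕜) ≠ 0 := mod_cast N.factorial_ne_zero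
  have hne : quarticProd (0 : 𝕜) (2 * n + k + 1) ≠ 0 := by
    rw [quarticProd_zero_left]
    exact pow_ne_zero 4 (hfac _)
  convert! ((hcomp.mul (hasDerivAt_quarticProd_zero (n + k))).div
    (hasDerivAt_quarticProd_zero (2 * n + k + 1)) hne).const_mul
      ((-1 : 𝕜) ^ n / n.centralBinom) using 1
  have := hfac (2 * n + k + 1)
  simp only [wzKernel, Pi.mul_apply, mul_zero, quarticProd_zero_left]
  field_simp
  ring

lemma wzKernel_zero_zero_div (n : ℕ) :
    wzKernel (0 : 𝕜) n 0 / (4 * (2 * n + 1)) =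
      8 * (-1) ^ n / ((n + 1) * (n + 1).centralBinom) ^ 5 := by
  have hfac : (n ! : 𝕜) ≠ 0 := mod_cast n.factorial_ne_zero
  have hbinom : (n.centralBinom : 𝕜) ≠ 0 := mod_cast n.centralBinom_ne_zero
  have hn : (n : 𝕜) + 1 ≠ 0 := n.cast_add_one_ne_zero
  have hodd : 2 * (n : 𝕜) + 1 ≠ 0 := mod_cast (2 * n).succ_ne_zero
  have hfactorial : ((2 * n + 1)! : 𝕜) = (2 * n + 1) * (n.centralBinom * (n ! : 𝕜) ^ 2) := by
    rw [Nat.factorial_succ, Nat.centralBinom]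
    have h := Nat.choose_mul_factorial_mul_factorial (Nat.le_mul_of_pos_left n two_pos)
    rw [show 2 * n - n = n by omega] at h
    rw [← h]
    push_cast
    ring
  rw [wzKernel, mul_zero, add_zero, add_zero, quarticProd_zero_left, quarticProd_zero_left,
    hfactorial, centralBinom_cast_succ]
  field_simp
  ring

lemma hasDerivAt_wzG_zero_zero (n : ℕ) :
    HasDerivAt (fun z : 𝕜 ↦ wzG z n 0)
      ((-1) ^ n / ((n + 1).centralBinom : 𝕜) ^ 5 *
        (-(49 - 245 * (n + 1) + 320 * (n + 1) ^ 2) / (n + 1) ^ 9 +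
          (3 * (genHarmonic 4 (n + 1) : ℝ) + (genHarmonic 4 (2 * (n + 1)) : ℝ)) *
            (205 * (n + 1) ^ 2 - 160 * (n + 1) + 32) / (2 * (n + 1) ^ 5))) 0 := by
  have hbinom : ((n + 1).centralBinom : 𝕜) ≠ 0 := mod_cast (n + 1).centralBinom_ne_zero
  have hn : (n : 𝕜) + 1 ≠ 0 := n.cast_add_one_ne_zero
  have hquot : HasDerivAt (fun z : 𝕜 ↦ (((n : 𝕜) + 1) ^ 4 + 4 * z) / ((2 * (n + 1)) ^ 4 - z))
      (65 / (256 * ((n : 𝕜) + 1) ^ 4)) 0 := by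
    have hne : (2 * (n + 1) : 𝕜) ^ 4 - 0 ≠ 0 := by simpa using hn
    convert! (((hasDerivAt_id (0 : 𝕜)).const_mul 4).const_add ((n + 1 : 𝕜) ^ 4)).div
      ((hasDerivAt_id (0 : 𝕜)).const_sub ((2 * (n + 1) : 𝕜) ^ 4)) hne using 1
    simp only [id]
    field_simp
    ring
  have hH : genHarmonic 4 (2 * (n + 1)) =
      genHarmonic 4 (2 * n + 1) + 1 / (16 * ((n : ℝ) + 1) ^ 4) := by
    rw [show 2 * (n + 1) = 2 * n + 1 + 1 by ring, genHarmonic_succ]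
    push_cast
    ring
  simp only [wzG_zero_right]
  convert! ((hasDerivAt_wzKernel_zero n 0).div_const (4 * (2 * n + 1) : 𝕜)).mul
    ((hquot.const_mul (3 * (n + 1 : 𝕜) ^ 2)).const_sub ((2 * n + 1) ^ 2 + (3 * n + 2) ^ 2 : 𝕜))
    using 1
  rw [mul_div_right_comm (wzKernel _ _ _), wzKernel_zero_zero_div, hH, genHarmonic_succ, add_zero,
    add_zero]
  push_cast
  field_simp
  ring

lemma hasDerivAt_wzF_zero_zero (k : ℕ) :
    HasDerivAt (fun z : 𝕜 ↦ wzF z 0 k) (1 / ((k : 𝕜) + 1) ^ 7) 0 := by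
  have hk : (k : 𝕜) + 1 ≠ 0 := k.cast_add_one_ne_zero
  have hne : ((k : 𝕜) + 1) ^ 4 - 0 ≠ 0 := by simpa using hk
  have hrat : HasDerivAt (fun z : 𝕜 ↦ (k + 1) / (((k : 𝕜) + 1) ^ 4 - z))
      (1 / ((k : 𝕜) + 1) ^ 7) 0 := by
    convert! (hasDerivAt_const (0 : 𝕜) ((k : 𝕜) + 1)).div
      ((hasDerivAt_id (0 : 𝕜)).const_sub (((k : 𝕜) + 1) ^ 4)) hne using 1
    simp only [id]
    field_simp
    ring
  refine hrat.congr_of_eventuallyEq ?_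
  filter_upwards [Metric.ball_mem_nhds (0 : 𝕜) one_pos] with z hz
  exact wzF_zero_left (natCast_pow_four_ne_of_norm_lt_one (mem_ball_zero_iff.1 hz)) k

end RCLike

theorem hasSum_deriv_wzG {z : ℂ} (hz : ‖z‖ < 1) :
    HasSum (fun n ↦ deriv (fun w ↦ wzG w n 0) z) (∑' k, deriv (fun w ↦ wzF w 0 k) z) := by
  obtain ⟨r, hzr, hr⟩ := exists_between hz
  obtain ⟨C, hC⟩ := exists_norm_wzF_le (𝕜 := ℂ) hr
  obtain ⟨D, hD⟩ := exists_norm_wzG_le (𝕜 := ℂ) hr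
  have hzU : z ∈ Metric.ball (0 : ℂ) r := mem_ball_zero_iff.2 hzr
  have hU {w : ℂ} (hw : w ∈ Metric.ball (0 : ℂ) r) : ‖w‖ < r := mem_ball_zero_iff.1 hw
  have hF := Complex.hasSum_deriv_of_summable_norm (F := fun k w ↦ wzF w 0 k)
    (summable_const_div_add_one_sq C)
    (fun k w hw ↦ (differentiableAt_wzF ((hU hw).trans hr) 0 k).differentiableWithinAt)
    Metric.isOpen_ball (fun k w hw ↦ by simpa using hC w (hU hw).le 0 k) hzU
  have hG := Complex.hasSum_deriv_of_summable_norm (F := fun n w ↦ wzG w n 0)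
    (summable_const_div_add_one_sq D)
    (fun n w hw ↦ (differentiableAt_wzG ((hU hw).trans hr) n 0).differentiableWithinAt)
    Metric.isOpen_ball (fun n w hw ↦ hD w (hU hw).le n 0) hzU
  have heq : (fun w ↦ ∑' n, wzG w n 0) =ᶠ[𝓝 z] fun w ↦ ∑' k, wzF w 0 k := by
    filter_upwards [Metric.isOpen_ball.mem_nhds hzU] with w hw
    exact (hasSum_wzG ((hU hw).trans hr)).tsum_eq
  rwa [hF.tsum_eq, ← heq.deriv_eq]

end Derivative

lemma risingFactorial_succ (a : ℝ) (n : ℕ) :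
    risingFactorial a (n + 1) = risingFactorial a n * (a + n) :=
  Finset.prod_range_succ _ _

lemma risingFactorial_one_div_risingFactorial_half (n : ℕ) :
    risingFactorial 1 n / risingFactorial (1 / 2) n = 4 ^ n / n.centralBinom := by
  induction n with
  | zero => simp [risingFactorial]
  | succ n ih =>
    have hbinom : (n.centralBinom : ℝ) ≠ 0 := mod_cast n.centralBinom_ne_zero
    rw [risingFactorial_succ, risingFactorial_succ, mul_div_mul_comm, ih, centralBinom_cast_succ]
    field_simp
    ring

lemma neg_one_div_pow_mul_risingFactorial_pow_five_div (n : ℕ) :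
    (-1 / 2 ^ 10 : ℝ) ^ n * risingFactorial 1 n ^ 5 / risingFactorial (1 / 2) n ^ 5 =
      (-1) ^ n / (n.centralBinom : ℝ) ^ 5 := by
  calc (-1 / 2 ^ 10 : ℝ) ^ n * risingFactorial 1 n ^ 5 / risingFactorial (1 / 2) n ^ 5
      = (-1 / 2 ^ 10) ^ n * (4 ^ n / n.centralBinom) ^ 5 := by
        rw [mul_div_assoc, ← div_pow, risingFactorial_one_div_risingFactorial_half]
    _ = (-1 / 2 ^ 10 * 4 ^ 5) ^ n / (n.centralBinom : ℝ) ^ 5 := by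
        rw [mul_pow, div_pow (_ ^ n), pow_right_comm, mul_div_assoc]
    _ = (-1) ^ n / (n.centralBinom : ℝ) ^ 5 := by norm_num

lemma riemannZeta_seven_eq_tsum : riemannZeta 7 = ∑' k : ℕ, 1 / ((k : ℂ) + 1) ^ 7 := by
  simpa using zeta_eq_tsum_one_div_nat_add_one_cpow (s := 7) (by norm_num)

theorem tsum_deriv_wzG_zero : ∑' n, deriv (fun z : ℂ ↦ wzG z n 0) 0 = riemannZeta 7 := by
  rw [(hasSum_deriv_wzG (by simp)).tsum_eq, riemannZeta_seven_eq_tsum]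
  exact tsum_congr fun k ↦ (hasDerivAt_wzF_zero_zero k).deriv

/-- With `p₀(n) = 205n²−160n+32`:
`∑_{n≥1} (−1/2^10)^n (1)ₙ^5/(1/2)ₙ^5 [ −(49−245n+320n²)/n^9 + (3H_n^{(4)} + H_{2n}^{(4)})p₀(n)/(2n^5) ]
  = −ζ(7)`. -/
theorem wz_zeta7_series :
    ∑' n : ℕ, ((((-1 / 2 ^ 10 : ℝ) ^ (n + 1) * (risingFactorial 1 (n + 1)) ^ 5 /
        (risingFactorial (1 / 2) (n + 1)) ^ 5 *
        (-(49 - 245 * ((n : ℝ) + 1) + 320 * ((n : ℝ) + 1) ^ 2) / ((n : ℝ) + 1) ^ 9 +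
          (3 * genHarmonic 4 (n + 1) + genHarmonic 4 (2 * (n + 1))) *
            (205 * ((n : ℝ) + 1) ^ 2 - 160 * ((n : ℝ) + 1) + 32) /
            (2 * ((n : ℝ) + 1) ^ 5)) : ℝ)) : ℂ)
      = -riemannZeta 7 := by
  rw [← tsum_deriv_wzG_zero, ← tsum_neg]
  refine tsum_congr fun n ↦ ?_
  rw [(hasDerivAt_wzG_zero_zero n).deriv, neg_one_div_pow_mul_risingFactorial_pow_five_div,
    RCLike.ofReal_eq_complex_ofReal, pow_succ (-1 : ℝ) n, mul_neg_one]
  push_cast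
  ring
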